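/- Let F be a formal group law over a commutative ring R. Then the F-Jacobi identity for delta distributions holds in R⟦z0^{±1},z1^{±1},z2^{±1}⟧: i_{z1,z2} z0^{-1}δ_F(F(z1,ι z2)/z0) − i_{z2,z1} z0^{-1}δ_F(F(z1,ι z2)/z0) = i_{z1,z0} z2^{-1}δ_F(F(z1,ι z0)/z2), where i_{z1,z2} z0^{-1}δ_F(F(z1,ι z2)/z0) denotes the bilateral series obtained from z0^{-1}δ_F(w/z0) by substituting w^{±1} ↦ i_{z1,z2}F(z1,ι z2)^{±1} (the integer powers of F(z1,ι z2) expanded in R((z1))((z2))), i_{z2,z1} the analogous substitution with powers expanded in R((z2))((z1)), and i_{z1,z0} z2^{-1}δ_F(F(z1,ι z0)/z2) the substitution w^{±1} ↦ i_{z1,z0}F(z1,ι z0)^{±1} into z2^{-1}δ_F(w/z2). -/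

import Mathlib

/-!
Coefficient-wise formal calculus for vertex `F`-algebras, following
M. Upmeier, "Vertex F-Algebras and Their Associated Lie Algebra".

Series in one, two or three variables are represented by their coefficient
functions `ℤ → R`, `ℤ → ℤ → R`, …; products are given by coefficient-wise
(finite) sums, expressed via `finsum` (`∑ᶠ`).
-/

open scoped BigOperators

noncomputable section

/-- Generalized binomial coefficient `C(n,k) = n(n-1)⋯(n-k+1)/k!` for `n : ℤ`, `k : ℕ`. -/
def zbinom (n : ℤ) (k : ℕ) : ℤ :=
  if 0 ≤ n then (n.toNat.choose k : ℤ)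
  else (-1 : ℤ) ^ k * (((k : ℤ) - n - 1).toNat.choose k : ℤ)

/-- `C(n,m)` for integer `m`, with `C(n,m) = 0` for `m < 0`. -/
def zbinomZ (n m : ℤ) : ℤ := if m < 0 then 0 else zbinom n m.toNat

/-- `(-1)^n` for `n : ℤ`. -/
def msign (n : ℤ) : ℤ := if Even n then 1 else -1

section Series

variable {R : Type*} [CommRing R] {M : Type*} [AddCommGroup M] [Module R M]

/-- Product of a one-variable series with `R`-coefficients with an `M`-valued one. -/
def mulS (f : ℤ → R) (g : ℤ → M) : ℤ → M := fun n => ∑ᶠ i : ℤ, f i • g (n - i)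

/-- The constant series `1` (one variable). -/
def oneS (R : Type*) [CommRing R] : ℤ → R := fun n => if n = 0 then 1 else 0

/-- Natural powers of a one-variable series. -/
def pow1 (f : ℤ → R) : ℕ → ℤ → R
  | 0 => oneS R
  | k + 1 => mulS f (pow1 f k)

/-- Product of two-variable series. -/
def mulS2 (f : ℤ → ℤ → R) (g : ℤ → ℤ → M) : ℤ → ℤ → M :=
  fun a b => ∑ᶠ p : ℤ × ℤ, f p.1 p.2 • g (a - p.1) (b - p.2)

/-- The constant series `1` (two variables). -/
def oneS2 (R : Type*) [CommRing R] : ℤ → ℤ → R := fun a b => if a = 0 ∧ b = 0 then 1 else 0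

/-- Natural powers of a two-variable series. -/
def pow2 (f : ℤ → ℤ → R) : ℕ → ℤ → ℤ → R
  | 0 => oneS2 R
  | k + 1 => mulS2 f (pow2 f k)

/-- `f ∈ M((z))`: only finitely many negative powers. -/
def IsLaurent (f : ℤ → M) : Prop := ∃ N : ℤ, ∀ n : ℤ, n < N → f n = 0

/-- `f ∈ M((z,w))`: only finitely many nonzero coefficients with some negative index. -/
def IsLaurent2 (f : ℤ → ℤ → M) : Prop :=
  {p : ℤ × ℤ | (p.1 < 0 ∨ p.2 < 0) ∧ f p.1 p.2 ≠ 0}.Finite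

/-- Formal derivative of a one-variable series. -/
def fderiv1 (f : ℤ → R) : ℤ → R := fun n => ((n + 1 : ℤ) : R) * f (n + 1)

/-- The polynomial `z - w` as a two-variable series. -/
def zmw (R : Type*) [CommRing R] : ℤ → ℤ → R :=
  fun i j => if i = 1 ∧ j = 0 then 1 else if i = 0 ∧ j = 1 then -1 else 0

/-- `∂/∂w` of a two-variable series. -/
def d01 (f : ℤ → ℤ → R) : ℤ → ℤ → R := fun i j => ((j + 1 : ℤ) : R) * f i (j + 1)

/-- `∂/∂z` of a two-variable series. -/
def d10 (f : ℤ → ℤ → R) : ℤ → ℤ → R := fun i j => ((i + 1 : ℤ) : R) * f (i + 1) j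

/-- Substitution `p(f(z,w))` of a two-variable series (zero constant term) into a
one-variable power series `p`. -/
def comp2 (p : ℤ → R) (f : ℤ → ℤ → R) : ℤ → ℤ → R :=
  fun a b => ∑ᶠ m : ℕ, p (m : ℤ) * pow2 f m a b

/-- Substitution `p(f(z))` of a one-variable series (zero constant term) into a
one-variable power series `p`. -/
def comp1 (p : ℤ → R) (f : ℤ → R) : ℤ → R :=
  fun a => ∑ᶠ m : ℕ, p (m : ℤ) * pow1 f m a

/-- `(G - z)/z` for `G ≡ z (mod w)`. -/
def hzS (G : ℤ → ℤ → R) : ℤ → ℤ → R := fun i j => G (i + 1) j - oneS2 R i j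

/-- Integer powers `i_{z,w} G^n`, for `G ≡ z (mod w)`, expanded in `R((z))⟦w⟧`:
the Newton expansion `z^n ∑_k C(n,k) ((G-z)/z)^k`. -/
def izwPow (G : ℤ → ℤ → R) (n : ℤ) : ℤ → ℤ → R :=
  fun a b => ∑ᶠ k : ℕ, (zbinom n k : R) * pow2 (hzS G) k (a - n) b

/-- `(G - w)/w` for `G ≡ w (mod z)`. -/
def hwS (G : ℤ → ℤ → R) : ℤ → ℤ → R := fun i j => G i (j + 1) - oneS2 R i j

/-- Integer powers `i_{w,z} G^n`, for `G ≡ w (mod z)`, expanded in `R((w))⟦z⟧`. -/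
def iwzPow (G : ℤ → ℤ → R) (n : ℤ) : ℤ → ℤ → R :=
  fun a b => ∑ᶠ k : ℕ, (zbinom n k : R) * pow2 (hwS G) k a (b - n)

/-- `(G + w)/(-w)` for `G ≡ ι(w) (mod z)`. -/
def hwNegS (G : ℤ → ℤ → R) : ℤ → ℤ → R := fun i j => -G i (j + 1) - oneS2 R i j

/-- Integer powers `i_{w,z} G^n`, for `G ≡ -w(1+⋯) (mod z)` (e.g. `G = F(z, ι w)`),
expanded in `R((w))⟦z⟧`. -/
def iwzPowNeg (G : ℤ → ℤ → R) (n : ℤ) : ℤ → ℤ → R :=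
  fun a b => (msign n : R) * ∑ᶠ k : ℕ, (zbinom n k : R) * pow2 (hwNegS G) k a (b - n)

/-- `(f + z)/(-z)` for a series `f = -z(1 + ⋯)` such as `ι(z)`. -/
def hS (f : ℤ → R) : ℤ → R := fun j => -f (j + 1) - oneS R j

/-- Integer powers `f(z)^n` (`n : ℤ`) for `f = -z(1+⋯)`, e.g. `f = ι(z)`. -/
def iotaPow (f : ℤ → R) (n : ℤ) : ℤ → R :=
  fun a => (msign n : R) * ∑ᶠ k : ℕ, (zbinom n k : R) * pow1 (hS f) k (a - n)

/-- `f - 1` for a power series with constant term `1`. -/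
def hOneS (f : ℤ → R) : ℤ → R := fun j => f j - oneS R j

/-- Multiplicative inverse of a power series with constant term `1`. -/
def invOne (f : ℤ → R) : ℤ → R :=
  fun a => ∑ᶠ k : ℕ, ((-1 : R) ^ k) * pow1 (hOneS f) k a

end Series

/-- A (one-dimensional, commutative) formal group law `F(z,w)` over `R`, together with
its (unique) inverse `ι`. -/
structure FormalGroupLaw (R : Type*) [CommRing R] where
  F : ℤ → ℤ → R
  F_supp : ∀ i j : ℤ, i < 0 ∨ j < 0 → F i j = 0
  /-- `F(z,0) = z`, so that `F(z,w) = z + w + O(zw)` using commutativity. -/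
  F_modw : ∀ i : ℤ, F i 0 = if i = 1 then 1 else 0
  F_comm : ∀ i j : ℤ, F i j = F j i
  /-- associativity `F(F(z,w),v) = F(z,F(w,v))`, coefficient-wise. -/
  F_assoc : ∀ a b c : ℤ,
    (∑ᶠ m : ℕ, F (m : ℤ) c * pow2 F m a b) = ∑ᶠ n : ℕ, F a (n : ℤ) * pow2 F n b c
  /-- the inverse `ι(z) = -z + O(z²)`. -/
  inv : ℤ → R
  inv_supp : ∀ n : ℤ, n < 1 → inv n = 0
  inv_one : inv 1 = -1
  /-- `F(z, ι(z)) = 0`, coefficient-wise. -/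
  inv_eq : ∀ n : ℤ, (∑ᶠ p : ℤ × ℕ, F p.1 (p.2 : ℤ) * pow1 inv p.2 (n - p.1)) = 0

namespace FormalGroupLaw

variable {R : Type*} [CommRing R] {M : Type*} [AddCommGroup M] [Module R M]

/-- The series `F(z, ι(w))`. -/
def Fzi (𝓕 : FormalGroupLaw R) : ℤ → ℤ → R :=
  fun i j => ∑ᶠ m : ℕ, 𝓕.F i (m : ℤ) * pow1 𝓕.inv m j

/-- The `F`-delta distribution `z⁻¹δ_F(w/z) = i_{z,w}F(z,ιw)⁻¹ - i_{w,z}F(z,ιw)⁻¹`. -/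
def delta (𝓕 : FormalGroupLaw R) : ℤ → ℤ → R :=
  fun a b => izwPow 𝓕.Fzi (-1) a b - iwzPowNeg 𝓕.Fzi (-1) a b

/-- `p_F(z) = F^{0,1}(z,0)⁻¹`, the coefficient series of the invariant 1-form. -/
def pF (𝓕 : FormalGroupLaw R) : ℤ → R := invOne (fun i => 𝓕.F i 1)

/-- `F`-residue: the coefficient of `z⁻¹` in `f(z)·p_F(z)`. -/
def resF (𝓕 : FormalGroupLaw R) (f : ℤ → M) : M := ∑ᶠ i : ℤ, 𝓕.pF i • f (-1 - i)

/-- The `F`-hyperderivative `𝒮^F_n f`, defined by `i_{z,w}f(F(z,w)) = ∑_n (𝒮^F_n f)(z) wⁿ`. -/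
def hyper (𝓕 : FormalGroupLaw R) (n : ℕ) (f : ℤ → R) : ℤ → R :=
  fun a => ∑ᶠ m : ℤ, f m * izwPow 𝓕.F m a (n : ℤ)

/-- `F`-binomial coefficients: `i_{z,w}F(z,w)^n = ∑_{i,j} binomF(n;i,j) z^i w^j`. -/
def binomF (𝓕 : FormalGroupLaw R) (n i j : ℤ) : R := izwPow 𝓕.F n i j

/-- `φ` is a logarithm of `F`: `φ(F(z,w)) = φ(z) + φ(w)`, `φ(0) = 0`, `φ'(0) = 1`. -/
def IsLogarithm (𝓕 : FormalGroupLaw R) (φ : ℤ → R) : Prop :=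
  (∀ n : ℤ, n < 0 → φ n = 0) ∧ φ 0 = 0 ∧ φ 1 = 1 ∧
  ∀ a b : ℤ, (∑ᶠ m : ℕ, φ (m : ℤ) * pow2 𝓕.F m a b)
    = (if b = 0 then φ a else 0) + (if a = 0 then φ b else 0)

end FormalGroupLaw

section Vertex

variable {R : Type*} [CommRing R] {V : Type*} [AddCommGroup V] [Module R V]

/-- For `c = ∑_m c_m v^m ∈ V((v))`, the substitution `v ↦ F(z,w)` (coefficient `(k,n)` of
`z^k w^n`, expanded in `V((z))⟦w⟧`). -/
def substF (𝓕 : FormalGroupLaw R) (c : ℤ → V) : ℤ → ℤ → V :=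
  fun k n => ∑ᶠ m : ℤ, izwPow 𝓕.F m k n • c m

/-- Coefficients of `i_{z,w} Y(a, F(z,w)) (Y(b,w)c)`, where `Ya v = Y(a,·)v` and
`d = Y(b,·)c`. -/
def substFProd (𝓕 : FormalGroupLaw R) (Ya : V → ℤ → V) (d : ℤ → V) : ℤ → ℤ → V :=
  fun k n => ∑ᶠ q : ℤ × ℤ, izwPow 𝓕.F q.1 k (n - q.2) • Ya (d q.2) q.1

end Vertex

/-- A vertex `F`-algebra `(V, 𝟙, 𝒮, Y)` over the formal group law `𝓕`.
`Y a b : ℤ → V` records the coefficients of `Y(a,z)b = ∑_k (Y a b k) z^k`, and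
`S n` is the component `𝒮⁽ⁿ⁾` of the `F`-shift operator `𝒮(z) = ∑_{n≥0} 𝒮⁽ⁿ⁾ zⁿ`. -/
structure VertexFAlgebra (R : Type*) [CommRing R] (𝓕 : FormalGroupLaw R)
    (V : Type*) [AddCommGroup V] [Module R V] where
  vac : V
  S : ℕ → V →ₗ[R] V
  Y : V →ₗ[R] V →ₗ[R] (ℤ → V)
  /-- `Y(a,z)b ∈ V((z))`. -/
  Y_laurent : ∀ a b : V, IsLaurent (Y a b)
  /-- `Y(a,z)𝟙` is holomorphic. -/
  vac_holo : ∀ (a : V) (k : ℤ), k < 0 → Y a vac k = 0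
  /-- `Y(a,z)𝟙|_{z=0} = a`. -/
  creation : ∀ a : V, Y a vac 0 = a
  /-- `Y(𝟙,z) = id`. -/
  Y_vac : ∀ (b : V) (k : ℤ), Y vac b k = if k = 0 then b else 0
  /-- `𝒮(0) = id`. -/
  S_zero : S 0 = LinearMap.id
  /-- `𝒮(z)𝟙 = 𝟙`. -/
  S_vac : ∀ n : ℕ, 1 ≤ n → S n vac = 0
  /-- `𝒮(z) ∘ 𝒮(w) = 𝒮(F(z,w))`, coefficient-wise. -/
  S_comp : ∀ (a : V) (i j : ℕ),
    S i (S j a) = ∑ᶠ m : ℕ, pow2 𝓕.F m (i : ℤ) (j : ℤ) • S m a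
  /-- `F`-translation covariance `Y(𝒮(w)a, z)b = i_{z,w} Y(a,F(z,w))b`. -/
  translation : ∀ (a b : V) (k : ℤ) (n : ℕ),
    Y (S n a) b k = substF 𝓕 (Y a b) k (n : ℤ)
  /-- weak `F`-associativity. -/
  weak_assoc : ∀ a b c : V, ∃ N : ℕ,
    mulS2 (pow2 𝓕.F N) (fun k l => Y (Y a b k) c l)
      = mulS2 (pow2 𝓕.F N) (substFProd 𝓕 (fun v => Y a v) (Y b c))
  /-- skew symmetry `Y(a,z)b = 𝒮(z)(Y(b,ι(z))a)`, coefficient-wise. -/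
  skew : ∀ (a b : V) (k : ℤ),
    Y a b k = ∑ᶠ q : ℕ × ℤ, iotaPow 𝓕.inv q.2 (k - (q.1 : ℤ)) • S q.1 (Y b a q.2)

end

/-!
The idea. In `F`-arithmetic `a - (b - c) = c - (b - a)`, so that
`F(z₀, ι F(z₁, ι z₂)) = F(z₂, ι F(z₁, ι z₀))`; split into the two halves of each `δ_F`, the Jacobi
identity compares expansions of the reciprocals of these two series in different domains. Two
expansions agree as soon as they are inverse to the same element of a common ring of series.

Such rings are obtained from power series rings by monomial changes of variables: for
`G = F(z, ι w)` one has `G(t, y t) = t V(y, t)` and `G(x t, t) = t W(x, t)` with units `V` and `W`,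
whose integer powers carry the coefficients of the integer powers of `G` expanded in
`R((z))⟦w⟧` and in `R((w))⟦z⟧`. All substitutions then take place among power series.
-/

noncomputable section

open MvPowerSeries

theorem finsum_comp_of_support_subset_range {α β N : Type*} [AddCommMonoid N] {g : α → β}
    (hg : Function.Injective g) {f : β → N} (hf : Function.support f ⊆ Set.range g) :
    ∑ᶠ x, f (g x) = ∑ᶠ y, f y := by
  rw [← finsum_mem_range hg, finsum_mem_def, Set.indicator_eq_self.2 hf]

theorem natCast_comp_injective {σ : Type*} :
    Function.Injective fun (d : σ →₀ ℕ) (s : σ) => (d s : ℤ) :=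
  Nat.cast_injective.comp_left.comp DFunLike.coe_injective

section IntegerExponents

variable {σ R : Type*} [Finite σ] [CommRing R]

/-- The coefficient of a power series at an integer exponent. It vanishes unless all entries of
the exponent are nonnegative, so that reindexing needs no truncated subtraction. -/
def intCoeff (f : MvPowerSeries σ R) (e : σ → ℤ) : R :=
  open Classical in
  if 0 ≤ e then coeff (Finsupp.equivFunOnFinite.symm fun s => (e s).toNat) f else 0

theorem intCoeff_natCast (f : MvPowerSeries σ R) (d : σ →₀ ℕ) :
    intCoeff f (fun s => d s) = coeff d f := by
  rw [intCoeff, if_pos (show (0 : σ → ℤ) ≤ _ from fun _ => Int.natCast_nonneg _)]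
  congr 2
  ext s
  simp

theorem intCoeff_of_neg (f : MvPowerSeries σ R) {e : σ → ℤ} {s : σ} (h : e s < 0) :
    intCoeff f e = 0 :=
  if_neg fun h' => h.not_ge (h' s)

theorem exists_eq_natCast_or_exists_neg (e : σ → ℤ) :
    (∃ d : σ →₀ ℕ, e = fun s => (d s : ℤ)) ∨ ∃ s, e s < 0 := by
  by_cases h : ∃ s, e s < 0
  · exact Or.inr h
  · push Not at h
    exact Or.inl ⟨Finsupp.equivFunOnFinite.symm fun s => (e s).toNat, by simp [h]⟩

theorem intCoeff_ext {f g : MvPowerSeries σ R} (h : ∀ e, intCoeff f e = intCoeff g e) : f = g :=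
  MvPowerSeries.ext fun d => by rw [← intCoeff_natCast, h, intCoeff_natCast]

theorem intCoeff_zero_right (f : MvPowerSeries σ R) : intCoeff f 0 = constantCoeff f :=
  intCoeff_natCast f 0

theorem intCoeff_zero (e : σ → ℤ) : intCoeff (0 : MvPowerSeries σ R) e = 0 := by
  simp [intCoeff]

theorem intCoeff_sub (f g : MvPowerSeries σ R) (e : σ → ℤ) :
    intCoeff (f - g) e = intCoeff f e - intCoeff g e := by
  unfold intCoeff
  split_ifs <;> simp

theorem intCoeff_neg (f : MvPowerSeries σ R) (e : σ → ℤ) :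
    intCoeff (-f) e = -intCoeff f e := by
  unfold intCoeff
  split_ifs <;> simp

theorem intCoeff_one (e : σ → ℤ) [Decidable (e = 0)] :
    intCoeff (1 : MvPowerSeries σ R) e = if e = 0 then 1 else 0 := by
  classical
  obtain rfl | he := eq_or_ne e 0
  · simp [intCoeff_zero_right]
  rw [if_neg he]
  obtain ⟨d, rfl⟩ | ⟨s, hs⟩ := exists_eq_natCast_or_exists_neg e
  · rw [intCoeff_natCast, coeff_one, if_neg (by rintro rfl; exact he rfl)]
  · exact intCoeff_of_neg _ hs

theorem intCoeff_mul (f g : MvPowerSeries σ R) (e : σ → ℤ) :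
    intCoeff (f * g) e = ∑ᶠ c, intCoeff f c * intCoeff g (e - c) := by
  classical
  obtain ⟨d, rfl⟩ | ⟨s, hs⟩ := exists_eq_natCast_or_exists_neg e
  · have cast_fst_injective : Function.Injective
        fun (p : Finset.HasAntidiagonal.antidiagonal d) (s : σ) => (p.1.1 s : ℤ) := by
      rintro ⟨⟨a, b⟩, hab⟩ ⟨⟨a', b'⟩, hab'⟩ h
      obtain rfl : a = a' := natCast_comp_injective h
      rw [Finset.HasAntidiagonal.mem_antidiagonal] at hab hab'
      obtain rfl : b = b' := add_left_cancel (hab.trans hab'.symm)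
      rfl
    rw [← finsum_comp_of_support_subset_range cast_fst_injective, finsum_eq_sum_of_fintype,
      intCoeff_natCast, coeff_mul, ← Finset.sum_coe_sort]
    · refine Finset.sum_congr rfl fun ⟨⟨a, b⟩, hab⟩ _ => ?_
      obtain rfl : a + b = d := Finset.HasAntidiagonal.mem_antidiagonal.1 hab
      have cast_sub : ((fun s => ((a + b) s : ℤ)) - fun s => (a s : ℤ)) = fun s => (b s : ℤ) := by
        ext s
        simp
      rw [cast_sub, intCoeff_natCast, intCoeff_natCast]
    · intro c hc
      obtain ⟨a, rfl⟩ | ⟨s, hs⟩ := exists_eq_natCast_or_exists_neg c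
      · obtain ⟨b, hb⟩ | ⟨s, hs⟩ :=
          exists_eq_natCast_or_exists_neg ((fun s => (d s : ℤ)) - fun s => (a s : ℤ))
        · refine ⟨⟨(a, b), ?_⟩, rfl⟩
          refine Finset.HasAntidiagonal.mem_antidiagonal.2 (Finsupp.ext fun s => ?_)
          have := congr_fun hb s
          simp only [Pi.sub_apply, Finsupp.add_apply] at this ⊢
          lia
        · simp [intCoeff_of_neg g hs] at hc
      · simp [intCoeff_of_neg f hs] at hc
  · rw [intCoeff_of_neg _ hs, finsum_eq_zero_of_forall_eq_zero fun c => ?_]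
    by_cases hc : c s < 0
    · rw [intCoeff_of_neg f hc, zero_mul]
    · rw [intCoeff_of_neg g (s := s) (by simp only [Pi.sub_apply]; lia), mul_zero]

theorem intCoeff_X_pow_mul [DecidableEq σ] (s : σ) (k : ℕ) (f : MvPowerSeries σ R) (e : σ → ℤ) :
    intCoeff (X s ^ k * f) e = intCoeff f (e - Pi.single s (k : ℤ)) := by
  obtain ⟨d, rfl⟩ | ⟨t, ht⟩ := exists_eq_natCast_or_exists_neg e
  · rw [intCoeff_natCast, X_pow_eq, coeff_monomial_mul, one_mul]
    split_ifs with h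
    · rw [← intCoeff_natCast]
      congr 1
      ext t
      obtain rfl | hts := eq_or_ne t s
      · have := Finsupp.single_le_iff.1 h
        simp [Nat.cast_sub this]
      · simp [hts]
    · rw [Finsupp.single_le_iff] at h
      rw [intCoeff_of_neg (s := s)]
      simp only [Pi.sub_apply, Pi.single_eq_same]
      lia
  · have : 0 ≤ (Pi.single s (k : ℤ) : σ → ℤ) t := by
      by_cases h : t = s <;> simp [h]
    rw [intCoeff_of_neg _ ht, intCoeff_of_neg (s := t)]
    simp only [Pi.sub_apply]
    lia

theorem intCoeff_X_mul [DecidableEq σ] (s : σ) (f : MvPowerSeries σ R) (e : σ → ℤ) :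
    intCoeff (X s * f) e = intCoeff f (e - Pi.single s 1) := by
  simpa using intCoeff_X_pow_mul s 1 f e

end IntegerExponents

section PowerBridge

variable {R : Type*} [CommRing R]

theorem intCoeff_pow_eq_pow1 {f : PowerSeries R} {g : ℤ → R}
    (h : ∀ n, intCoeff f (fun _ => n) = g n) (k : ℕ) (n : ℤ) :
    intCoeff (f ^ k) (fun _ => n) = pow1 g k n := by
  induction k generalizing n with
  | zero => simp [intCoeff_one, pow1, oneS, funext_iff]
  | succ k ih =>
    rw [pow_succ', intCoeff_mul, ← finsum_comp_equiv (Equiv.funUnique Unit ℤ).symm, pow1, mulS]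
    exact finsum_congr fun i => congrArg₂ _ (h i) (ih (n - i))

/-- The exponent of `z ^ p.1 * w ^ p.2`. -/
def pairExponent : ℤ × ℤ ≃+ (Fin 2 → ℤ) where
  toFun p := ![p.1, p.2]
  invFun e := (e 0, e 1)
  left_inv p := by simp
  right_inv e := by ext k; fin_cases k <;> rfl
  map_add' p q := by simp

/-- The exponent in `(y, t)` that `z ^ p.1 * w ^ p.2` acquires under `z = t`, `w = y * t`. -/
def leftChart : ℤ × ℤ ≃+ (Fin 2 → ℤ) where
  toFun p := ![p.2, p.1 + p.2]
  invFun e := (e 1 - e 0, e 0)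
  left_inv p := by simp
  right_inv e := by ext k; fin_cases k <;> simp
  map_add' p q := by simp [add_add_add_comm]

/-- The exponent in `(x, t)` that `z ^ p.1 * w ^ p.2` acquires under `z = x * t`, `w = t`. -/
def rightChart : ℤ × ℤ ≃+ (Fin 2 → ℤ) where
  toFun p := ![p.1, p.1 + p.2]
  invFun e := (e 0, e 1 - e 0)
  left_inv p := by simp
  right_inv e := by ext k; fin_cases k <;> simp
  map_add' p q := by simp [add_add_add_comm]

theorem intCoeff_pow_eq_pow2 (ε : ℤ × ℤ ≃+ (Fin 2 → ℤ)) {f : MvPowerSeries (Fin 2) R}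
    {g : ℤ → ℤ → R} (h : ∀ a b, intCoeff f (ε (a, b)) = g a b) (k : ℕ) (a b : ℤ) :
    intCoeff (f ^ k) (ε (a, b)) = pow2 g k a b := by
  induction k generalizing a b with
  | zero => simp [intCoeff_one, pow2, oneS2]
  | succ k ih =>
    rw [pow_succ', intCoeff_mul, ← finsum_comp_equiv ε.toEquiv, pow2, mulS2]
    refine finsum_congr fun p => congrArg₂ _ (h p.1 p.2) ?_
    rw [← ih]
    exact congrArg (intCoeff (f ^ k)) (map_sub ε (a, b) p).symm

end PowerBridge

section BinomialExpansion

variable {σ R : Type*} [CommRing R]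

theorem zbinom_eq_choose (n : ℤ) (k : ℕ) : zbinom n k = Ring.choose n k := by
  rw [zbinom]
  split_ifs with h
  · obtain ⟨n, rfl⟩ := Int.eq_ofNat_of_zero_le h
    rw [Int.toNat_natCast, Ring.choose_natCast]
  · obtain ⟨m, rfl⟩ : ∃ m : ℤ, n = -m := ⟨-n, by simp⟩
    obtain ⟨l, hl⟩ := Int.eq_ofNat_of_zero_le (show 0 ≤ (k : ℤ) - -m - 1 by lia)
    rw [Ring.choose_neg, show m + (k : ℤ) - 1 = (l : ℤ) by lia, hl, Int.toNat_natCast,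
      Ring.choose_natCast, Units.smul_def, smul_eq_mul, Int.negOnePow_def]
    simp

theorem subst_binomialSeries_eq_zpow {U : (MvPowerSeries σ R)ˣ}
    (hU : constantCoeff (U - 1 : MvPowerSeries σ R) = 0) (n : ℤ) :
    PowerSeries.subst (U - 1 : MvPowerSeries σ R) (PowerSeries.binomialSeries R n) =
      (↑(U ^ n) : MvPowerSeries σ R) := by
  have hs := PowerSeries.HasSubst.of_constantCoeff_zero hU
  have subst_nat (m : ℕ) : PowerSeries.subst (U - 1 : MvPowerSeries σ R)
      (PowerSeries.binomialSeries R (m : ℤ)) = (↑(U ^ m) : MvPowerSeries σ R) := by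
    rw [PowerSeries.binomialSeries_nat, PowerSeries.subst_pow hs, PowerSeries.subst_add hs,
      PowerSeries.subst_X hs, ← PowerSeries.coe_substAlgHom hs, map_one, Units.val_pow_eq_pow_val,
      add_sub_cancel]
  obtain ⟨m, rfl | rfl⟩ := n.eq_nat_or_neg
  · rw [subst_nat, zpow_natCast]
  · rw [zpow_neg, zpow_natCast]
    apply Units.eq_inv_of_mul_eq_one_right
    rw [← subst_nat, ← PowerSeries.subst_mul hs, ← PowerSeries.binomialSeries_add, neg_add_cancel,
      PowerSeries.binomialSeries_zero, ← PowerSeries.coe_substAlgHom hs, map_one]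

theorem intCoeff_zpow_eq_finsum_zbinom [Finite σ] {U : (MvPowerSeries σ R)ˣ}
    (hU : constantCoeff (U - 1 : MvPowerSeries σ R) = 0) (n : ℤ) (e : σ → ℤ) :
    intCoeff (↑(U ^ n) : MvPowerSeries σ R) e =
      ∑ᶠ k : ℕ, (zbinom n k : R) * intCoeff ((U - 1 : MvPowerSeries σ R) ^ k) e := by
  obtain ⟨d, rfl⟩ | ⟨s, hs⟩ := exists_eq_natCast_or_exists_neg e
  · rw [intCoeff_natCast, ← subst_binomialSeries_eq_zpow hU,
      PowerSeries.coeff_subst (PowerSeries.HasSubst.of_constantCoeff_zero hU)]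
    refine finsum_congr fun k => ?_
    rw [PowerSeries.binomialSeries_coeff, zbinom_eq_choose, intCoeff_natCast]
    simp
  · simp [intCoeff_of_neg _ hs]

theorem finsum_zbinom_mul_pow2_eq_intCoeff_zpow (ε : ℤ × ℤ ≃+ (Fin 2 → ℤ))
    {U : (MvPowerSeries (Fin 2) R)ˣ} {h : ℤ → ℤ → R} (h0 : h 0 0 = 0)
    (hU : ∀ a b, intCoeff (U : MvPowerSeries (Fin 2) R) (ε (a, b)) - oneS2 R a b = h a b)
    (n a b : ℤ) : ∑ᶠ k : ℕ, (zbinom n k : R) * pow2 h k a b =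
      intCoeff (↑(U ^ n) : MvPowerSeries (Fin 2) R) (ε (a, b)) := by
  have sub_one (a b : ℤ) :
      intCoeff (U - 1 : MvPowerSeries (Fin 2) R) (ε (a, b)) = h a b := by
    rw [intCoeff_sub, ← hU]
    simp [intCoeff_one, oneS2]
  have constantCoeff_sub_one : constantCoeff (U - 1 : MvPowerSeries (Fin 2) R) = 0 := by
    rw [← intCoeff_zero_right, ← map_zero ε, ← h0]
    exact sub_one 0 0
  rw [intCoeff_zpow_eq_finsum_zbinom constantCoeff_sub_one]
  simp only [intCoeff_pow_eq_pow2 ε sub_one]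

theorem neg_zpow_eq_msign_mul {A : Type*} [CommRing A] (U : Aˣ) (n : ℤ) :
    (↑((-U) ^ n) : A) = msign n * ↑(U ^ n) := by
  rw [msign]
  split_ifs with h
  · simp [h.neg_zpow]
  · simp [(Int.not_even_iff_odd.1 h).neg_zpow]

theorem msign_mul_intCoeff [Finite σ] (n : ℤ) (f : MvPowerSeries σ R) (e : σ → ℤ) :
    (msign n : R) * intCoeff f e = intCoeff ((msign n : MvPowerSeries σ R) * f) e := by
  rw [msign]
  split_ifs <;> simp [intCoeff_neg]

theorem izwPow_eq_intCoeff_zpow {G : ℤ → ℤ → R} (hG : G 1 0 = 1)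
    {V : (MvPowerSeries (Fin 2) R)ˣ}
    (hV : ∀ a b, intCoeff (V : MvPowerSeries (Fin 2) R) (leftChart (a, b)) = G (a + 1) b)
    (n a b : ℤ) :
    izwPow G n a b = intCoeff (↑(V ^ n) : MvPowerSeries (Fin 2) R) ![b, a - n + b] :=
  finsum_zbinom_mul_pow2_eq_intCoeff_zpow leftChart (h := hzS G) (by simp [hzS, oneS2, hG])
    (fun a b => by rw [hV, hzS]) n (a - n) b

theorem iwzPowNeg_eq_intCoeff_zpow {G : ℤ → ℤ → R} (hG : G 0 1 = -1)
    {W : (MvPowerSeries (Fin 2) R)ˣ}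
    (hW : ∀ a b, intCoeff (W : MvPowerSeries (Fin 2) R) (rightChart (a, b)) = G a (b + 1))
    (n a b : ℤ) :
    iwzPowNeg G n a b = intCoeff (↑(W ^ n) : MvPowerSeries (Fin 2) R) ![a, a + (b - n)] := by
  rw [iwzPowNeg, finsum_zbinom_mul_pow2_eq_intCoeff_zpow rightChart (U := -W)
    (by simp [hwNegS, oneS2, hG]) (fun a b => by rw [Units.val_neg, intCoeff_neg, hW, hwNegS]),
    msign_mul_intCoeff, ← neg_zpow_eq_msign_mul, neg_neg]
  rfl

end BinomialExpansion

section PairSubstitution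

variable {R σ τ : Type*} [CommRing R] {a b : MvPowerSeries σ R}

theorem hasSubst_pair (ha : constantCoeff a = 0) (hb : constantCoeff b = 0) : HasSubst ![a, b] :=
  hasSubst_of_constantCoeff_zero (by simp [Fin.forall_fin_two, ha, hb])

theorem constantCoeff_subst_pair (ha : constantCoeff a = 0) (hb : constantCoeff b = 0)
    {f : MvPowerSeries (Fin 2) R} (hf : constantCoeff f = 0) :
    constantCoeff (subst ![a, b] f) = 0 :=
  constantCoeff_subst_eq_zero (hasSubst_pair ha hb) (by simp [Fin.forall_fin_two, ha, hb]) hf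

theorem subst_pair_X_zero (ha : constantCoeff a = 0) (hb : constantCoeff b = 0) :
    subst ![a, b] (X 0 : MvPowerSeries (Fin 2) R) = a :=
  subst_X (hasSubst_pair ha hb) 0

theorem subst_pair_X_one (ha : constantCoeff a = 0) (hb : constantCoeff b = 0) :
    subst ![a, b] (X 1 : MvPowerSeries (Fin 2) R) = b :=
  subst_X (hasSubst_pair ha hb) 1

theorem subst_subst_pair {c : σ → MvPowerSeries τ R} (hc : HasSubst c)
    (ha : constantCoeff a = 0) (hb : constantCoeff b = 0) (f : MvPowerSeries (Fin 2) R) :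
    subst c (subst ![a, b] f) = subst ![subst c a, subst c b] f := by
  rw [subst_comp_subst_apply (hasSubst_pair ha hb) hc]
  congr 1
  funext k
  fin_cases k <;> rfl

theorem X_dvd_subst_pair {r : σ} (ha : X r ∣ a) (hb : X r ∣ b) {f : MvPowerSeries (Fin 2) R}
    (hf : constantCoeff f = 0) : X r ∣ subst ![a, b] f := by
  have constantCoeff_of_dvd {c : MvPowerSeries σ R} (hc : X r ∣ c) : constantCoeff c = 0 := by
    obtain ⟨c, rfl⟩ := hc
    simp
  rw [X_dvd_iff]
  intro e he
  rw [coeff_subst (hasSubst_pair (constantCoeff_of_dvd ha) (constantCoeff_of_dvd hb))]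
  refine finsum_eq_zero_of_forall_eq_zero fun d => ?_
  rw [Finsupp.prod_pow, Fin.prod_univ_two]
  by_cases hd : d = 0
  · rw [hd, coeff_zero_eq_constantCoeff_apply, hf, zero_smul]
  have dvd : X r ∣ a ^ d 0 * b ^ d 1 := by
    by_cases h0 : d 0 = 0
    · have h1 : d 1 ≠ 0 := fun h1 => hd (by ext k; fin_cases k <;> simp [h0, h1])
      exact (dvd_pow hb h1).mul_left _
    · exact (dvd_pow ha h0).mul_right _
  exact smul_eq_zero_of_right _ (X_dvd_iff.1 dvd e he)

variable [Finite σ]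

theorem intCoeff_subst_pair_eq_finsum_toNat (ha : constantCoeff a = 0) (hb : constantCoeff b = 0)
    (f : MvPowerSeries (Fin 2) R) (e : σ → ℤ) :
    intCoeff (subst ![a, b] f) e =
      ∑ᶠ k : ℤ × ℤ, intCoeff f ![k.1, k.2] * intCoeff (a ^ k.1.toNat * b ^ k.2.toNat) e := by
  have natCast_pair (d : Fin 2 →₀ ℕ) : ![(d 0 : ℤ), d 1] = fun k => (d k : ℤ) := by
    ext k; fin_cases k <;> rfl
  have cast_injective :
      Function.Injective fun d : Fin 2 →₀ ℕ => ((d 0 : ℤ), (d 1 : ℤ)) := fun c d h =>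
    natCast_comp_injective (by simpa [natCast_pair] using congrArg (fun p => ![p.1, p.2]) h)
  rw [← finsum_comp_of_support_subset_range cast_injective]
  · simp only [natCast_pair, intCoeff_natCast, Int.toNat_natCast]
    obtain ⟨d, rfl⟩ | ⟨s, hs⟩ := exists_eq_natCast_or_exists_neg e
    · simp only [intCoeff_natCast]
      rw [coeff_subst (hasSubst_pair ha hb)]
      refine finsum_congr fun d => ?_
      rw [Finsupp.prod_pow, Fin.prod_univ_two, smul_eq_mul]
      rfl
    · simp [intCoeff_of_neg _ hs]
  · rintro ⟨i, j⟩ hij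
    obtain ⟨d, hd⟩ | ⟨k, hk⟩ := exists_eq_natCast_or_exists_neg ![i, j]
    · exact ⟨d, Prod.ext (congr_fun hd 0).symm (congr_fun hd 1).symm⟩
    · simp [intCoeff_of_neg f hk] at hij

theorem intCoeff_subst_pair {α : Type*} (ha : constantCoeff a = 0) (hb : constantCoeff b = 0)
    (f : MvPowerSeries (Fin 2) R) {e : σ → ℤ} {γ : α → ℤ × ℤ} (hγ : Function.Injective γ)
    {g : α → R} (hg : ∀ x (i j : ℕ), γ x = (↑i, ↑j) → intCoeff (a ^ i * b ^ j) e = g x)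
    (hg0 : ∀ i j : ℕ, (↑i, ↑j) ∉ Set.range γ → intCoeff (a ^ i * b ^ j) e = 0) :
    intCoeff (subst ![a, b] f) e = ∑ᶠ x, intCoeff f ![(γ x).1, (γ x).2] * g x := by
  have eq_natCast_of_ne_zero {k : ℤ × ℤ} (hk : intCoeff f ![k.1, k.2] ≠ 0) :
      k = (↑k.1.toNat, ↑k.2.toNat) := by
    obtain ⟨d, hd⟩ | ⟨s, hs⟩ := exists_eq_natCast_or_exists_neg ![k.1, k.2]
    · obtain ⟨h0, h1⟩ := And.intro (congr_fun hd 0) (congr_fun hd 1)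
      simp only [Matrix.cons_val_zero, Matrix.cons_val_one] at h0 h1
      ext <;> simp [h0, h1]
    · exact absurd (intCoeff_of_neg f hs) hk
  rw [intCoeff_subst_pair_eq_finsum_toNat ha hb, ← finsum_comp_of_support_subset_range hγ]
  · refine finsum_congr fun x => ?_
    by_cases hx : intCoeff f ![(γ x).1, (γ x).2] = 0
    · rw [hx, zero_mul, zero_mul]
    · rw [hg x _ _ (eq_natCast_of_ne_zero hx)]
  · intro k hk
    by_contra hkγ
    rw [eq_natCast_of_ne_zero (left_ne_zero_of_mul hk)] at hkγ
    exact right_ne_zero_of_mul hk (hg0 _ _ hkγ)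

theorem intCoeff_subst_pair_eq (ha : constantCoeff a = 0) (hb : constantCoeff b = 0)
    (f : MvPowerSeries (Fin 2) R) {e : σ → ℤ} {i j : ℤ}
    (h : ∀ k l : ℕ, intCoeff (a ^ k * b ^ l) e = if (k : ℤ) = i ∧ (l : ℤ) = j then 1 else 0) :
    intCoeff (subst ![a, b] f) e = intCoeff f ![i, j] := by
  rw [intCoeff_subst_pair ha hb f (γ := fun _ : Unit => (i, j)) (g := 1)
    (Function.injective_of_subsingleton _)]
  · simp [finsum_eq_sum_of_fintype]
  · intro _ k l hkl
    simp_all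
  · intro k l hkl
    rw [h, if_neg]
    rintro ⟨rfl, rfl⟩
    exact hkl ⟨(), rfl⟩

theorem intCoeff_subst_pair_eq_zero (ha : constantCoeff a = 0) (hb : constantCoeff b = 0)
    (f : MvPowerSeries (Fin 2) R) {e : σ → ℤ} (h : ∀ k l : ℕ, intCoeff (a ^ k * b ^ l) e = 0) :
    intCoeff (subst ![a, b] f) e = 0 := by
  rw [intCoeff_subst_pair_eq_finsum_toNat ha hb]
  simp [h]

end PairSubstitution

section MonomialSubstitution

variable {R : Type*} [CommRing R]

theorem intCoeff_subst_leftChart (f : MvPowerSeries (Fin 2) R) (i j : ℤ) :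
    intCoeff (subst ![X 1, X 0 * X 1] f : MvPowerSeries (Fin 2) R) (leftChart (i, j)) =
      intCoeff f ![i, j] := by
  refine intCoeff_subst_pair_eq (by simp) (by simp) f fun k l => ?_
  have h : X 1 ^ k * (X 0 * X 1) ^ l =
      X 1 ^ (k + l) * (X 0 ^ l * 1 : MvPowerSeries (Fin 2) R) := by ring
  rw [h, intCoeff_X_pow_mul, intCoeff_X_pow_mul, intCoeff_one]
  refine if_congr ?_ rfl rfl
  rw [funext_iff, Fin.forall_fin_two]
  simp only [leftChart, AddEquiv.coe_mk, Equiv.coe_fn_mk, Pi.sub_apply, Pi.zero_apply,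
    Pi.single_apply, Matrix.cons_val_zero, Matrix.cons_val_one, zero_ne_one, one_ne_zero,
    reduceIte]
  lia

theorem intCoeff_subst_rightChart (f : MvPowerSeries (Fin 2) R) (i j : ℤ) :
    intCoeff (subst ![X 0 * X 1, X 1] f : MvPowerSeries (Fin 2) R) (rightChart (i, j)) =
      intCoeff f ![i, j] := by
  refine intCoeff_subst_pair_eq (by simp) (by simp) f fun k l => ?_
  have h : (X 0 * X 1) ^ k * X 1 ^ l =
      X 1 ^ (k + l) * (X 0 ^ k * 1 : MvPowerSeries (Fin 2) R) := by ring
  rw [h, intCoeff_X_pow_mul, intCoeff_X_pow_mul, intCoeff_one]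
  refine if_congr ?_ rfl rfl
  rw [funext_iff, Fin.forall_fin_two]
  simp only [rightChart, AddEquiv.coe_mk, Equiv.coe_fn_mk, Pi.sub_apply, Pi.zero_apply,
    Pi.single_apply, Matrix.cons_val_zero, Matrix.cons_val_one, zero_ne_one, one_ne_zero,
    reduceIte]
  lia

variable {p q r : Fin 3}

theorem forall_fin_three_of_ne (hpq : p ≠ q) (hpr : p ≠ r) (hqr : q ≠ r) {C : Fin 3 → Prop} :
    (∀ k, C k) ↔ C p ∧ C q ∧ C r := by
  refine ⟨fun h => ⟨h p, h q, h r⟩, fun ⟨hp, hq, hr⟩ k => ?_⟩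
  obtain rfl | rfl | rfl : k = p ∨ k = q ∨ k = r := by lia
  exacts [hp, hq, hr]

theorem intCoeff_X_pow_mul_X_pow_mul_subst_X_X (hpq : p ≠ q) (hpr : p ≠ r) (hqr : q ≠ r)
    (f : MvPowerSeries (Fin 2) R) (i j : ℕ) (e : Fin 3 → ℤ) :
    intCoeff (X p ^ i * (X r ^ j * subst ![X q, X r] f) : MvPowerSeries (Fin 3) R) e =
      if (i : ℤ) = e p then intCoeff f ![e q, e r - j] else 0 := by
  have monomial_eq (k l : ℕ) : intCoeff (X q ^ k * X r ^ l : MvPowerSeries (Fin 3) R)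
      (e - Pi.single p (i : ℤ) - Pi.single r (j : ℤ)) =
        if (i : ℤ) = e p ∧ (k : ℤ) = e q ∧ (l : ℤ) = e r - j then 1 else 0 := by
    rw [← mul_one (X r ^ l), intCoeff_X_pow_mul, intCoeff_X_pow_mul, intCoeff_one]
    refine if_congr ?_ rfl rfl
    simp only [funext_iff, forall_fin_three_of_ne hpq hpr hqr, Pi.sub_apply, Pi.zero_apply,
      Pi.single_apply, hpq, hpr, hqr, hpq.symm, hpr.symm, hqr.symm, reduceIte]
    lia
  rw [intCoeff_X_pow_mul, intCoeff_X_pow_mul]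
  split_ifs with h
  · exact intCoeff_subst_pair_eq (by simp) (by simp) f fun k l => by
      rw [monomial_eq]; simp [h]
  · exact intCoeff_subst_pair_eq_zero (by simp) (by simp) f fun k l => by
      rw [monomial_eq]; simp [h]

theorem intCoeff_subst_X_mul_X_X_mul_X (hpq : p ≠ q) (hpr : p ≠ r) (hqr : q ≠ r)
    (f : MvPowerSeries (Fin 2) R) (e : Fin 3 → ℤ) :
    intCoeff (subst ![X p * X r, X q * X r] f : MvPowerSeries (Fin 3) R) e =
      if e r = e p + e q then intCoeff f ![e p, e q] else 0 := by
  have monomial_eq (k l : ℕ) :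
      intCoeff ((X p * X r) ^ k * (X q * X r) ^ l : MvPowerSeries (Fin 3) R) e =
        if e r = e p + e q ∧ (k : ℤ) = e p ∧ (l : ℤ) = e q then 1 else 0 := by
    have h : (X p * X r) ^ k * (X q * X r) ^ l =
        (X p ^ k * (X q ^ l * (X r ^ (k + l) * 1)) : MvPowerSeries (Fin 3) R) := by ring
    rw [h, intCoeff_X_pow_mul, intCoeff_X_pow_mul, intCoeff_X_pow_mul, intCoeff_one]
    refine if_congr ?_ rfl rfl
    simp only [funext_iff, forall_fin_three_of_ne hpq hpr hqr, Pi.sub_apply, Pi.zero_apply,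
      Pi.single_apply, hpq, hpr, hqr, hpq.symm, hpr.symm, hqr.symm, reduceIte]
    lia
  split_ifs with h
  · exact intCoeff_subst_pair_eq (by simp) (by simp) f fun k l => by
      rw [monomial_eq]; simp [h]
  · exact intCoeff_subst_pair_eq_zero (by simp) (by simp) f fun k l => by
      rw [monomial_eq]; simp [h]

theorem intCoeff_subst_X_subst_X_X (hpq : p ≠ q) (hpr : p ≠ r) (hqr : q ≠ r)
    {f : MvPowerSeries (Fin 2) R} (hf : constantCoeff f = 0) (h : MvPowerSeries (Fin 2) R)
    (e : Fin 3 → ℤ) :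
    intCoeff (subst ![X p, subst ![X q, X r] f] h : MvPowerSeries (Fin 3) R) e =
      ∑ᶠ m : ℕ, intCoeff h ![e p, m] * intCoeff (f ^ m) ![e q, e r] := by
  have monomial_eq (i m : ℕ) :
      intCoeff (X p ^ i * subst ![X q, X r] f ^ m : MvPowerSeries (Fin 3) R) e =
        if (i : ℤ) = e p then intCoeff (f ^ m) ![e q, e r] else 0 := by
    rw [← subst_pow (hasSubst_pair (by simp) (by simp)), ← one_mul (subst _ _), ← pow_zero (X r),
      intCoeff_X_pow_mul_X_pow_mul_subst_X_X hpq hpr hqr, Nat.cast_zero, sub_zero]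
  refine intCoeff_subst_pair (γ := fun m : ℕ => (e p, (m : ℤ))) (by simp)
    (constantCoeff_subst_pair (by simp) (by simp) hf) h
    (fun _ _ hmn => Nat.cast_injective (congrArg Prod.snd hmn)) ?_ ?_
  · intro n i m him
    obtain ⟨hi, hm⟩ := Prod.mk_inj.1 him
    rw [monomial_eq, if_pos hi.symm, Nat.cast_injective hm]
  · intro i m him
    rw [monomial_eq, if_neg]
    exact fun hi => him ⟨m, by rw [hi]⟩

theorem intCoeff_subst_subst_X_X_X (hpq : p ≠ q) (hpr : p ≠ r) (hqr : q ≠ r)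
    {f : MvPowerSeries (Fin 2) R} (hf : constantCoeff f = 0) (h : MvPowerSeries (Fin 2) R)
    (e : Fin 3 → ℤ) :
    intCoeff (subst ![subst ![X p, X q] f, X r] h : MvPowerSeries (Fin 3) R) e =
      ∑ᶠ m : ℕ, intCoeff h ![m, e r] * intCoeff (f ^ m) ![e p, e q] := by
  have monomial_eq (m i : ℕ) :
      intCoeff (subst ![X p, X q] f ^ m * X r ^ i : MvPowerSeries (Fin 3) R) e =
        if (i : ℤ) = e r then intCoeff (f ^ m) ![e p, e q] else 0 := by
    rw [← subst_pow (hasSubst_pair (by simp) (by simp)), mul_comm, ← one_mul (subst _ _),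
      ← pow_zero (X q), intCoeff_X_pow_mul_X_pow_mul_subst_X_X hpr.symm hqr.symm hpq,
      Nat.cast_zero, sub_zero]
  refine intCoeff_subst_pair (γ := fun m : ℕ => ((m : ℤ), e r))
    (constantCoeff_subst_pair (by simp) (by simp) hf) (by simp) h
    (fun _ _ hmn => Nat.cast_injective (congrArg Prod.fst hmn)) ?_ ?_
  · intro n m i hmi
    obtain ⟨hm, hi⟩ := Prod.mk_inj.1 hmi
    rw [monomial_eq, if_pos hi.symm, Nat.cast_injective hm]
  · intro m i hmi
    rw [monomial_eq, if_neg]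
    exact fun hi => hmi ⟨m, by rw [hi]⟩

theorem intCoeff_subst_X_one (f : PowerSeries R) (e : Fin 2 → ℤ) :
    intCoeff (PowerSeries.subst (X 1 : MvPowerSeries (Fin 2) R) f) e =
      if e 0 = 0 then intCoeff f (fun _ => e 1) else 0 := by
  obtain ⟨d, rfl⟩ | ⟨s, hs⟩ := exists_eq_natCast_or_exists_neg e
  · have mem_range : d = Finsupp.single 1 (d 1) ↔ (d 0 : ℤ) = 0 := by
      simp [Finsupp.ext_iff, Fin.forall_fin_two]
    have coeff_eq : PowerSeries.coeff (d 1) f = intCoeff f fun _ => (d 1 : ℤ) := by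
      simpa using (intCoeff_natCast f (Finsupp.single () (d 1))).symm
    rw [intCoeff_natCast, PowerSeries.coeff_subst_single, ← coeff_eq]
    exact if_congr mem_range rfl rfl
  · rw [intCoeff_of_neg _ hs]
    split_ifs with h0
    · obtain rfl : s = 1 := by
        by_contra h
        obtain rfl : s = 0 := by lia
        lia
      rw [intCoeff_of_neg _ (s := ()) hs]
    · rfl

end MonomialSubstitution

section Charts

variable {R : Type*} [CommRing R] {G : MvPowerSeries (Fin 2) R}

theorem intCoeff_pow_leftChart {V : MvPowerSeries (Fin 2) R}
    (hV : X 1 * V = subst ![X 1, X 0 * X 1] G) (m : ℕ) (a b : ℤ) :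
    intCoeff (V ^ m) (leftChart (a - m, b)) = intCoeff (G ^ m) ![a, b] := by
  rw [← intCoeff_subst_leftChart, subst_pow (hasSubst_pair (by simp) (by simp)), ← hV, mul_pow,
    intCoeff_X_pow_mul]
  congr 1
  ext k
  fin_cases k <;> simp [leftChart, sub_add_eq_add_sub]

theorem intCoeff_pow_rightChart {W : MvPowerSeries (Fin 2) R}
    (hW : X 1 * W = subst ![X 0 * X 1, X 1] G) (m : ℕ) (a b : ℤ) :
    intCoeff (W ^ m) (rightChart (a, b - m)) = intCoeff (G ^ m) ![a, b] := by
  rw [← intCoeff_subst_rightChart, subst_pow (hasSubst_pair (by simp) (by simp)), ← hW, mul_pow,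
    intCoeff_X_pow_mul]
  congr 1
  ext k
  fin_cases k <;> simp [rightChart, add_sub_assoc]

theorem exists_unit_X_one_mul_eq_subst_left (hG : constantCoeff G = 0)
    (hu : IsUnit (intCoeff G ![1, 0])) : ∃ V : (MvPowerSeries (Fin 2) R)ˣ,
      X 1 * (V : MvPowerSeries (Fin 2) R) = subst ![X 1, X 0 * X 1] G := by
  obtain ⟨V, hV⟩ := X_dvd_subst_pair (dvd_refl (X 1 : MvPowerSeries (Fin 2) R))
    (dvd_mul_left _ (X 0)) hG
  have constantCoeff_V : constantCoeff V = intCoeff G ![1, 0] := by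
    simpa [show leftChart (0, 0) = 0 from map_zero leftChart, intCoeff_zero_right] using
      intCoeff_pow_leftChart hV.symm 1 1 0
  obtain ⟨V, rfl⟩ : IsUnit V := isUnit_iff_constantCoeff.2 (constantCoeff_V ▸ hu)
  exact ⟨V, hV.symm⟩

theorem exists_unit_X_one_mul_eq_subst_right (hG : constantCoeff G = 0)
    (hu : IsUnit (intCoeff G ![0, 1])) : ∃ W : (MvPowerSeries (Fin 2) R)ˣ,
      X 1 * (W : MvPowerSeries (Fin 2) R) = subst ![X 0 * X 1, X 1] G := by
  obtain ⟨W, hW⟩ := X_dvd_subst_pair (dvd_mul_left (X 1 : MvPowerSeries (Fin 2) R) (X 0))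
    (dvd_refl (X 1)) hG
  have constantCoeff_W : constantCoeff W = intCoeff G ![0, 1] := by
    simpa [show rightChart (0, 0) = 0 from map_zero rightChart, intCoeff_zero_right] using
      intCoeff_pow_rightChart hW.symm 1 0 1
  obtain ⟨W, rfl⟩ : IsUnit W := isUnit_iff_constantCoeff.2 (constantCoeff_W ▸ hu)
  exact ⟨W, hW.symm⟩

end Charts

section NestedExpansion

variable {σ R : Type*} [CommRing R] {G : MvPowerSeries (Fin 2) R} {x y t : MvPowerSeries σ R}
  {V W : (MvPowerSeries (Fin 2) R)ˣ}

theorem mul_subst_eq_subst_left (hy : constantCoeff y = 0) (ht : constantCoeff t = 0)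
    (hV : X 1 * (V : MvPowerSeries (Fin 2) R) = subst ![X 1, X 0 * X 1] G) :
    t * subst ![y, t] (V : MvPowerSeries (Fin 2) R) = subst ![t, y * t] G := by
  have hs := hasSubst_pair hy ht
  have subst_hV := congrArg (subst ![y, t]) hV
  rwa [subst_mul hs, subst_subst_pair hs (by simp) (by simp), subst_mul hs,
    subst_pair_X_zero hy ht, subst_pair_X_one hy ht] at subst_hV

theorem mul_subst_eq_subst_right (hx : constantCoeff x = 0) (ht : constantCoeff t = 0)
    (hW : X 1 * (W : MvPowerSeries (Fin 2) R) = subst ![X 0 * X 1, X 1] G) :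
    t * subst ![x, t] (W : MvPowerSeries (Fin 2) R) = subst ![x * t, t] G := by
  have hs := hasSubst_pair hx ht
  have subst_hW := congrArg (subst ![x, t]) hW
  rwa [subst_mul hs, subst_subst_pair hs (by simp) (by simp), subst_mul hs,
    subst_pair_X_zero hx ht, subst_pair_X_one hx ht] at subst_hW

theorem subst_mul_subst_inv_left (hy : constantCoeff y = 0) (ht : constantCoeff t = 0)
    (hV : X 1 * (V : MvPowerSeries (Fin 2) R) = subst ![X 1, X 0 * X 1] G) :
    subst ![t, y * t] G * subst ![y, t] (↑V⁻¹ : MvPowerSeries (Fin 2) R) = t := by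
  have hs := hasSubst_pair hy ht
  rw [← mul_subst_eq_subst_left hy ht hV, mul_assoc, ← subst_mul hs, Units.mul_inv,
    ← coe_substAlgHom hs, map_one, mul_one]

theorem subst_mul_subst_inv_right (hx : constantCoeff x = 0) (ht : constantCoeff t = 0)
    (hW : X 1 * (W : MvPowerSeries (Fin 2) R) = subst ![X 0 * X 1, X 1] G) :
    subst ![x * t, t] G * subst ![x, t] (↑W⁻¹ : MvPowerSeries (Fin 2) R) = t := by
  have hs := hasSubst_pair hx ht
  rw [← mul_subst_eq_subst_right hx ht hW, mul_assoc, ← subst_mul hs, Units.mul_inv,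
    ← coe_substAlgHom hs, map_one, mul_one]

/-- The unit `Q(X q, X r)`, through which the inner expansion of a nested one enters. -/
def pairUnit (q r : σ) (Q : (MvPowerSeries (Fin 2) R)ˣ) : (MvPowerSeries σ R)ˣ :=
  Units.map (substAlgHom (R := R) (S := R) (hasSubst_pair (constantCoeff_X q) (constantCoeff_X r)))
    Q

theorem coe_pairUnit_zpow (q r : σ) (Q : (MvPowerSeries (Fin 2) R)ˣ) (n : ℤ) :
    (↑(pairUnit q r Q ^ n) : MvPowerSeries σ R) =
      subst ![X q, X r] (↑(Q ^ n) : MvPowerSeries (Fin 2) R) := by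
  rw [pairUnit, ← map_zpow, Units.coe_map,
    ← coe_substAlgHom (hasSubst_pair (constantCoeff_X q) (constantCoeff_X r))]
  rfl

theorem coe_pairUnit (q r : σ) (Q : (MvPowerSeries (Fin 2) R)ˣ) :
    (pairUnit q r Q : MvPowerSeries σ R) = subst ![X q, X r] (Q : MvPowerSeries (Fin 2) R) := by
  simpa using coe_pairUnit_zpow q r Q 1

theorem X_mul_pairUnit_left (q r : σ)
    (hV : X 1 * (V : MvPowerSeries (Fin 2) R) = subst ![X 1, X 0 * X 1] G) :
    X r * (pairUnit q r V : MvPowerSeries σ R) = subst ![X r, X q * X r] G := by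
  rw [coe_pairUnit, mul_subst_eq_subst_left (constantCoeff_X q) (constantCoeff_X r) hV]

theorem X_mul_pairUnit_right (q r : σ)
    (hW : X 1 * (W : MvPowerSeries (Fin 2) R) = subst ![X 0 * X 1, X 1] G) :
    X r * (pairUnit q r W : MvPowerSeries σ R) = subst ![X q * X r, X r] G := by
  rw [coe_pairUnit, mul_subst_eq_subst_right (constantCoeff_X q) (constantCoeff_X r) hW]

/-- The pair `(x, t)` with `x * t = X p * X r` and `t = X r * Q(X q, X r)`, which brings
`G(X p * X r, X r * Q(X q, X r))` into the form `G(x * t, t)`. -/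
def nestedPair (p q r : σ) (Q : (MvPowerSeries (Fin 2) R)ˣ) :
    Fin 2 → MvPowerSeries σ R :=
  ![X p * (↑(pairUnit q r Q)⁻¹ : MvPowerSeries σ R), X r * (pairUnit q r Q : MvPowerSeries σ R)]

/-- The quotient `X r / G(X p * X r, X r * Q(X q, X r))`, where `G(x * t, t) = t * W(x, t)`. Its
coefficients are those of a nested expansion of `G⁻¹`. -/
def nestedQuotient (p q r : σ) (W Q : (MvPowerSeries (Fin 2) R)ˣ) :
    MvPowerSeries σ R :=
  ↑(pairUnit q r Q)⁻¹ * subst (nestedPair p q r Q) (↑W⁻¹ : MvPowerSeries (Fin 2) R)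

theorem subst_mul_nestedQuotient (p q r : σ) {Q : (MvPowerSeries (Fin 2) R)ˣ}
    (hW : X 1 * (W : MvPowerSeries (Fin 2) R) = subst ![X 0 * X 1, X 1] G) :
    subst ![X p * X r, X r * (pairUnit q r Q : MvPowerSeries σ R)] G *
      nestedQuotient p q r W Q = X r := by
  have h := subst_mul_subst_inv_right (x := X p * (↑(pairUnit q r Q)⁻¹ : MvPowerSeries σ R))
    (t := X r * (pairUnit q r Q : MvPowerSeries σ R)) (by simp) (by simp) hW
  rw [mul_mul_mul_comm, Units.inv_mul, mul_one] at h
  rw [nestedQuotient, nestedPair, mul_left_comm, h, mul_left_comm, Units.inv_mul, mul_one]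

variable {p q r : Fin 3}

theorem intCoeff_subst_nestedPair (hpq : p ≠ q) (hpr : p ≠ r) (hqr : q ≠ r)
    (Q : (MvPowerSeries (Fin 2) R)ˣ) (f : MvPowerSeries (Fin 2) R) (e : Fin 3 → ℤ) :
    intCoeff (subst (nestedPair p q r Q) f) e =
      ∑ᶠ j : ℤ, intCoeff f ![e p, j] *
        intCoeff (↑(Q ^ (j - e p)) : MvPowerSeries (Fin 2) R) ![e q, e r - j] := by
  have monomial_eq (i j : ℕ) : (X p * (↑(pairUnit q r Q)⁻¹ : MvPowerSeries (Fin 3) R)) ^ i *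
      (X r * (pairUnit q r Q : MvPowerSeries (Fin 3) R)) ^ j =
        X p ^ i * (X r ^ j * subst ![X q, X r] (↑(Q ^ (j - i : ℤ)) : MvPowerSeries (Fin 2) R)) := by
    rw [← coe_pairUnit_zpow, zpow_sub, zpow_natCast, zpow_natCast, mul_pow, mul_pow]
    push_cast
    ring
  refine intCoeff_subst_pair (by simp) (by simp) f (Prod.mk_right_injective (e p)) ?_ ?_
  · rintro j i l hil
    obtain ⟨hi, rfl⟩ := Prod.mk_inj.1 hil
    rw [monomial_eq, intCoeff_X_pow_mul_X_pow_mul_subst_X_X hpq hpr hqr, if_pos hi.symm, hi]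
  · intro i l hil
    rw [monomial_eq, intCoeff_X_pow_mul_X_pow_mul_subst_X_X hpq hpr hqr, if_neg]
    rintro hi
    exact hil ⟨l, by rw [hi]⟩

theorem intCoeff_nestedQuotient (hpq : p ≠ q) (hpr : p ≠ r) (hqr : q ≠ r)
    (W Q : (MvPowerSeries (Fin 2) R)ˣ) (e : Fin 3 → ℤ) :
    intCoeff (nestedQuotient p q r W Q) e =
      ∑ᶠ m : ℤ, intCoeff (↑W⁻¹ : MvPowerSeries (Fin 2) R) ![e p, e p + (m + 1)] *
        intCoeff (↑(Q ^ m) : MvPowerSeries (Fin 2) R) ![e q, e r - e p - 1 - m] := by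
  have X_mul_eq : X p * nestedQuotient p q r W Q =
      subst (nestedPair p q r Q) (X 0 * (↑W⁻¹ : MvPowerSeries (Fin 2) R)) := by
    rw [nestedPair, subst_mul (hasSubst_pair (by simp) (by simp)),
      subst_pair_X_zero (by simp) (by simp), nestedQuotient, nestedPair, mul_assoc]
  rw [← add_sub_cancel_right e (Pi.single p 1), ← intCoeff_X_mul, X_mul_eq,
    intCoeff_subst_nestedPair hpq hpr hqr,
    ← finsum_comp_equiv (Equiv.addLeft (e p + 1))]
  refine finsum_congr fun m => ?_
  rw [intCoeff_X_mul]
  congr 2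
  · ext k
    fin_cases k <;> simp [add_comm]
  · congr 2
    simp
  · simp [hpq.symm, hpr.symm, sub_sub, add_assoc]

theorem exists_X_mul_eq_subst_X_mul (hpq : p ≠ q) (hpr : p ≠ r) (hqr : q ≠ r)
    (hG : constantCoeff G = 0) : ∃ Y : MvPowerSeries (Fin 3) R,
      X r * Y = subst ![X q * X r, X p * X r] G ∧ constantCoeff Y = 0 := by
  obtain ⟨Y, hY⟩ := X_dvd_subst_pair (dvd_mul_left (X r : MvPowerSeries (Fin 3) R) (X q))
    (dvd_mul_left (X r) (X p)) hG
  refine ⟨Y, hY.symm, ?_⟩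
  rw [← intCoeff_zero_right, ← sub_self (Pi.single r 1), ← intCoeff_X_mul, ← hY,
    intCoeff_subst_X_mul_X_X_mul_X hpq.symm hqr hpr]
  simp [hpr, hqr]

theorem intCoeff_subst_X_mul_eq_subst (hpq : p ≠ q) (hpr : p ≠ r) (hqr : q ≠ r)
    (hV : X 1 * (V : MvPowerSeries (Fin 2) R) = subst ![X 1, X 0 * X 1] G)
    {Y : MvPowerSeries (Fin 3) R} (hY0 : constantCoeff Y = 0)
    (hY : X r * Y = subst ![X q * X r, X p * X r] G) (f : MvPowerSeries (Fin 2) R)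
    (e : Fin 3 → ℤ) :
    intCoeff (subst ![Y, X r] f) e = ∑ᶠ m : ℤ, intCoeff f ![m, e r + m - e p - e q] *
      intCoeff (↑(V ^ m) : MvPowerSeries (Fin 2) R) ![e p, e q - m + e p] := by
  have monomial_eq (c d : ℕ) : intCoeff (Y ^ c * X r ^ d) e =
      if (d : ℤ) = e r + c - e p - e q then
        intCoeff (↑(V ^ (c : ℤ)) : MvPowerSeries (Fin 2) R) (leftChart (e q - c, e p)) else 0 := by
    rw [← add_sub_cancel_right e (Pi.single r (c : ℤ)), ← intCoeff_X_pow_mul, ← mul_assoc,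
      ← mul_pow, hY, mul_comm, ← subst_pow (hasSubst_pair (by simp) (by simp)),
      intCoeff_X_pow_mul, intCoeff_subst_X_mul_X_X_mul_X hpq.symm hqr hpr]
    simp only [Pi.sub_apply, Pi.add_apply, Pi.single_eq_same, Pi.single_eq_of_ne hpr,
      Pi.single_eq_of_ne hqr, add_zero, sub_zero]
    rw [zpow_natCast, Units.val_pow_eq_pow_val, intCoeff_pow_leftChart hV]
    exact if_congr (by lia) rfl rfl
  refine intCoeff_subst_pair (γ := fun m => (m, e r + m - e p - e q)) hY0 (by simp) f
    (fun _ _ h => congrArg Prod.fst h) ?_ ?_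
  · intro m c d hcd
    obtain ⟨rfl, hd⟩ := Prod.mk_inj.1 hcd
    rw [monomial_eq, if_pos hd.symm]
    rfl
  · intro c d hcd
    rw [monomial_eq, if_neg]
    exact fun hd => hcd ⟨c, by rw [hd]⟩

theorem eq_of_mul_eq_of_mem_nonZeroDivisors {A : Type*} [CommRing A] {x h a b : A}
    (hx : x ∈ nonZeroDivisors A) (ha : h * a = x) (hb : h * b = x) : a = b :=
  (mul_cancel_right_mem_nonZeroDivisors hx).1 (by linear_combination b * ha - a * hb)

end NestedExpansion

namespace FormalGroupLaw

variable {R : Type*} [CommRing R] (𝓕 : FormalGroupLaw R)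

/-- The power series `F(z, w)`. -/
def series : MvPowerSeries (Fin 2) R := fun d => 𝓕.F (d 0) (d 1)

/-- The power series `ι(z)`. -/
def invSeries : PowerSeries R := PowerSeries.mk fun n => 𝓕.inv n

theorem coeff_series (d : Fin 2 →₀ ℕ) : coeff d 𝓕.series = 𝓕.F (d 0) (d 1) := rfl

theorem intCoeff_series (i j : ℤ) : intCoeff 𝓕.series ![i, j] = 𝓕.F i j := by
  obtain ⟨d, hd⟩ | ⟨k, hk⟩ := exists_eq_natCast_or_exists_neg ![i, j]
  · obtain rfl : i = d 0 := congr_fun hd 0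
    obtain rfl : j = d 1 := congr_fun hd 1
    rw [hd, intCoeff_natCast, coeff_series]
  · rw [intCoeff_of_neg _ hk, 𝓕.F_supp]
    exact Fin.exists_fin_two (p := fun k => ![i, j] k < 0).1 ⟨k, hk⟩

theorem constantCoeff_series : constantCoeff 𝓕.series = 0 := by
  rw [← coeff_zero_eq_constantCoeff_apply, coeff_series]
  simp [F_modw]

theorem intCoeff_series_pow (m : ℕ) (i j : ℤ) :
    intCoeff (𝓕.series ^ m) ![i, j] = pow2 𝓕.F m i j :=
  intCoeff_pow_eq_pow2 pairExponent 𝓕.intCoeff_series m i j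

theorem constantCoeff_invSeries : PowerSeries.constantCoeff 𝓕.invSeries = 0 := by
  rw [← PowerSeries.coeff_zero_eq_constantCoeff_apply, invSeries, PowerSeries.coeff_mk]
  exact 𝓕.inv_supp _ (by simp)

theorem intCoeff_invSeries (n : ℤ) : intCoeff 𝓕.invSeries (fun _ => n) = 𝓕.inv n := by
  obtain ⟨d, hd⟩ | ⟨k, hk⟩ := exists_eq_natCast_or_exists_neg fun _ : Unit => n
  · obtain rfl : n = d () := congr_fun hd ()
    rw [hd, intCoeff_natCast, Finsupp.unique_single d]
    simp [invSeries, ← PowerSeries.coeff_def rfl]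
  · rw [intCoeff_of_neg _ (s := k) hk, 𝓕.inv_supp n (by lia)]

theorem intCoeff_invSeries_pow (m : ℕ) (n : ℤ) :
    intCoeff (𝓕.invSeries ^ m) (fun _ => n) = pow1 𝓕.inv m n :=
  intCoeff_pow_eq_pow1 𝓕.intCoeff_invSeries m n

theorem series_assoc :
    subst ![subst ![X 0, X 1] 𝓕.series, X 2] 𝓕.series =
      subst ![X 0, subst ![X 1, X 2] 𝓕.series] 𝓕.series (S := R) (τ := Fin 3) := by
  refine intCoeff_ext fun e => ?_
  rw [intCoeff_subst_subst_X_X_X (by decide) (by decide) (by decide) 𝓕.constantCoeff_series,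
    intCoeff_subst_X_subst_X_X (by decide) (by decide) (by decide) 𝓕.constantCoeff_series]
  simp only [intCoeff_series, intCoeff_series_pow]
  exact 𝓕.F_assoc (e 0) (e 1) (e 2)

/-- The formal group law as a Mathlib `FormalGroup`. -/
def toFormalGroup : FormalGroup R where
  toPowerSeries := 𝓕.series
  zero_constantCoeff := 𝓕.constantCoeff_series
  lin_coeff_X := by simp [coeff_series, F_modw]
  lin_coeff_Y := by simp [coeff_series, F_comm 𝓕 0, F_modw]
  assoc := 𝓕.series_assoc

instance : 𝓕.toFormalGroup.IsComm where
  comm := by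
    refine intCoeff_ext fun e => ?_
    have eq_pair : e = ![e 0, e 1] := by
      ext s; fin_cases s <;> rfl
    change intCoeff 𝓕.series e = intCoeff (subst ![X 1, X 0] 𝓕.series) e
    rw [intCoeff_subst_pair_eq (constantCoeff_X 1) (constantCoeff_X 0) _ (i := e 1) (j := e 0),
      eq_pair, intCoeff_series, intCoeff_series]
    · exact 𝓕.F_comm _ _
    · intro k l
      rw [intCoeff_X_pow_mul, ← mul_one (X 0 ^ l), intCoeff_X_pow_mul, intCoeff_one]
      refine if_congr ?_ rfl rfl
      simp [funext_iff, Fin.forall_fin_two]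
      lia

theorem subst_X_invSeries :
    subst ![(PowerSeries.X : PowerSeries R), 𝓕.invSeries] 𝓕.series = (0 : PowerSeries R) := by
  refine intCoeff_ext fun e => ?_
  have coeff_mul_pow (i m : ℕ) :
      intCoeff (PowerSeries.X ^ i * 𝓕.invSeries ^ m) e = pow1 𝓕.inv m (e () - i) := by
    rw [← intCoeff_invSeries_pow]
    exact (intCoeff_X_pow_mul () i _ e).trans (congrArg _ (by ext; simp))
  rw [intCoeff_subst_pair PowerSeries.constantCoeff_X 𝓕.constantCoeff_invSeries _
    (γ := Prod.map id Nat.cast) (g := fun p : ℤ × ℕ => pow1 𝓕.inv p.2 (e () - p.1))]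
  · simp only [intCoeff_series, intCoeff_zero]
    exact 𝓕.inv_eq (e ())
  · exact Function.injective_id.prodMap Nat.cast_injective
  · rintro ⟨i, m⟩ i' m' h
    simp only [Prod.map, Prod.mk.injEq, id, Nat.cast_inj] at h
    obtain ⟨rfl, rfl⟩ := h
    exact coeff_mul_pow i' m
  · rintro i j h
    exact absurd ⟨((i : ℤ), j), rfl⟩ h

section Points

variable {σ : Type*}

theorem subst_subst_invSeries {x : MvPowerSeries σ R} (hx : PowerSeries.HasSubst x) :
    subst ![x, PowerSeries.subst x 𝓕.invSeries] 𝓕.series = 0 := by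
  have h := congrArg (PowerSeries.subst x) 𝓕.subst_X_invSeries
  rw [← PowerSeries.coe_substAlgHom hx, map_zero, PowerSeries.coe_substAlgHom, PowerSeries.subst,
    subst_subst_pair hx.const PowerSeries.constantCoeff_X 𝓕.constantCoeff_invSeries] at h
  rw [← h]
  congr
  exact (PowerSeries.subst_X hx).symm

instance : Neg (𝓕.toFormalGroup.Point σ) where
  neg x := ⟨PowerSeries.subst x.val 𝓕.invSeries,
    IsNilpotent_subst x.prop.const (𝓕.constantCoeff_invSeries ▸ IsNilpotent.zero)⟩

instance : AddCommGroup (𝓕.toFormalGroup.Point σ) where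
  __ := (inferInstance : AddCommMonoid (𝓕.toFormalGroup.Point σ))
  zsmul := zsmulRec
  neg_add_cancel x := by
    rw [add_comm]
    exact Subtype.ext (𝓕.subst_subst_invSeries x.prop)

/-- The power series `F(z, ι(w))`. -/
def subSeries : MvPowerSeries (Fin 2) R :=
  subst ![X 0, PowerSeries.subst (X 1 : MvPowerSeries (Fin 2) R) 𝓕.invSeries] 𝓕.series

theorem constantCoeff_subst_X_invSeries :
    constantCoeff (PowerSeries.subst (X 1 : MvPowerSeries (Fin 2) R) 𝓕.invSeries) = 0 :=
  constantCoeff_subst_eq_zero (PowerSeries.HasSubst.X (1 : Fin 2)).const (by simp)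
    𝓕.constantCoeff_invSeries

theorem constantCoeff_subSeries : constantCoeff 𝓕.subSeries = 0 :=
  constantCoeff_subst_pair (constantCoeff_X _) 𝓕.constantCoeff_subst_X_invSeries
    𝓕.constantCoeff_series

theorem subst_subSeries {a b : MvPowerSeries σ R} (ha : constantCoeff a = 0)
    (hb : constantCoeff b = 0) : subst ![a, b] 𝓕.subSeries =
      subst ![a, PowerSeries.subst b 𝓕.invSeries] 𝓕.series := by
  rw [subSeries, subst_subst_pair (hasSubst_pair ha hb) (constantCoeff_X _)
    𝓕.constantCoeff_subst_X_invSeries, subst_pair_X_zero ha hb, PowerSeries.subst,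
    subst_comp_subst_apply (PowerSeries.HasSubst.X (1 : Fin 2)).const (hasSubst_pair ha hb),
    subst_pair_X_one ha hb]
  rfl

theorem subst_subSeries_subst_subSeries {a b c : MvPowerSeries σ R} (ha : constantCoeff a = 0)
    (hb : constantCoeff b = 0) (hc : constantCoeff c = 0) :
    subst ![a, subst ![b, c] 𝓕.subSeries] 𝓕.subSeries =
      subst ![c, subst ![b, a] 𝓕.subSeries] 𝓕.subSeries := by
  let point {x : MvPowerSeries σ R} (hx : constantCoeff x = 0) : 𝓕.toFormalGroup.Point σ :=
    ⟨x, PowerSeries.HasSubst.of_constantCoeff_zero hx⟩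
  have sub_sub_comm (x y z : 𝓕.toFormalGroup.Point σ) : x + -(y + -z) = z + -(y + -x) := by abel
  rw [𝓕.subst_subSeries ha (constantCoeff_subst_pair hb hc 𝓕.constantCoeff_subSeries),
    𝓕.subst_subSeries hb hc,
    𝓕.subst_subSeries hc (constantCoeff_subst_pair hb ha 𝓕.constantCoeff_subSeries),
    𝓕.subst_subSeries hb ha]
  exact congrArg Subtype.val (sub_sub_comm (point ha) (point hb) (point hc))

end Points

theorem intCoeff_subSeries (i j : ℤ) : intCoeff 𝓕.subSeries ![i, j] = 𝓕.Fzi i j := by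
  have coeff_mul_pow (k m : ℕ) : intCoeff (X 0 ^ k * PowerSeries.subst
      (X 1 : MvPowerSeries (Fin 2) R) 𝓕.invSeries ^ m) ![i, j] =
        if (k : ℤ) = i then pow1 𝓕.inv m j else 0 := by
    rw [← PowerSeries.subst_pow (PowerSeries.HasSubst.X (1 : Fin 2)), intCoeff_X_pow_mul,
      intCoeff_subst_X_one, ← intCoeff_invSeries_pow]
    refine if_congr ?_ (congrArg _ (by ext; simp)) rfl
    simp [sub_eq_zero, eq_comm]
  rw [subSeries, intCoeff_subst_pair (constantCoeff_X _) 𝓕.constantCoeff_subst_X_invSeries _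
    (γ := fun m : ℕ => (i, (m : ℤ))) (g := fun m => pow1 𝓕.inv m j)]
  · simp only [intCoeff_series, Fzi]
  · exact fun m n h => Nat.cast_injective (congrArg Prod.snd h)
  · intro m k l h
    obtain ⟨h0, h1⟩ := Prod.mk.inj h
    rw [coeff_mul_pow, if_pos h0.symm, Nat.cast_injective h1]
  · intro k l h
    rw [coeff_mul_pow, if_neg]
    exact fun hk => h ⟨l, by rw [hk]⟩

theorem Fzi_one_zero : 𝓕.Fzi 1 0 = 1 := by
  have eq_zero_of_ne (m : ℕ) (hm : m ≠ 0) : 𝓕.F 1 m * pow1 𝓕.inv m 0 = 0 := by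
    have constantCoeff_eq : constantCoeff 𝓕.invSeries = 0 := 𝓕.constantCoeff_invSeries
    rw [← intCoeff_invSeries_pow, show (fun _ : Unit => (0 : ℤ)) = 0 from rfl, intCoeff_zero_right,
      map_pow, constantCoeff_eq, zero_pow hm, mul_zero]
  rw [Fzi, finsum_eq_single _ 0 eq_zero_of_ne]
  simp [F_modw, pow1, oneS]

theorem Fzi_zero_one : 𝓕.Fzi 0 1 = -1 := by
  have eq_zero_of_ne (m : ℕ) (hm : m ≠ 1) : 𝓕.F 0 m * pow1 𝓕.inv m 1 = 0 := by
    rw [F_comm, F_modw, if_neg (by exact_mod_cast hm), zero_mul]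
  rw [Fzi, finsum_eq_single _ 1 eq_zero_of_ne, ← intCoeff_invSeries_pow, pow_one, F_comm, F_modw,
    intCoeff_invSeries, 𝓕.inv_one, Nat.cast_one, if_pos rfl, one_mul]

theorem exists_leftUnit : ∃ V : (MvPowerSeries (Fin 2) R)ˣ,
    X 1 * (V : MvPowerSeries (Fin 2) R) = subst ![X 1, X 0 * X 1] 𝓕.subSeries :=
  exists_unit_X_one_mul_eq_subst_left 𝓕.constantCoeff_subSeries <| by
    simp [intCoeff_subSeries, Fzi_one_zero]

theorem exists_rightUnit : ∃ W : (MvPowerSeries (Fin 2) R)ˣ,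
    X 1 * (W : MvPowerSeries (Fin 2) R) = subst ![X 0 * X 1, X 1] 𝓕.subSeries :=
  exists_unit_X_one_mul_eq_subst_right 𝓕.constantCoeff_subSeries <| by
    simp [intCoeff_subSeries, Fzi_zero_one]

/-- The unit `V(y, t)` with `F(t, ι(y t)) = t V(y, t)`, whose integer powers encode
`i_{z,w} F(z, ι(w))ⁿ`. -/
def leftUnit : (MvPowerSeries (Fin 2) R)ˣ := 𝓕.exists_leftUnit.choose

/-- The unit `W(x, t)` with `F(x t, ι(t)) = t W(x, t)`, whose integer powers encode
`i_{w,z} F(z, ι(w))ⁿ`. -/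
def rightUnit : (MvPowerSeries (Fin 2) R)ˣ := 𝓕.exists_rightUnit.choose

theorem X_one_mul_leftUnit : X 1 * (𝓕.leftUnit : MvPowerSeries (Fin 2) R) =
    subst ![X 1, X 0 * X 1] 𝓕.subSeries :=
  𝓕.exists_leftUnit.choose_spec

theorem X_one_mul_rightUnit : X 1 * (𝓕.rightUnit : MvPowerSeries (Fin 2) R) =
    subst ![X 0 * X 1, X 1] 𝓕.subSeries :=
  𝓕.exists_rightUnit.choose_spec

theorem izwPow_Fzi (n a b : ℤ) : izwPow 𝓕.Fzi n a b =
    intCoeff (↑(𝓕.leftUnit ^ n) : MvPowerSeries (Fin 2) R) ![b, a - n + b] := by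
  refine izwPow_eq_intCoeff_zpow 𝓕.Fzi_one_zero (fun a b => ?_) n a b
  simpa [intCoeff_subSeries] using intCoeff_pow_leftChart 𝓕.X_one_mul_leftUnit 1 (a + 1) b

theorem iwzPowNeg_Fzi (n a b : ℤ) : iwzPowNeg 𝓕.Fzi n a b =
    intCoeff (↑(𝓕.rightUnit ^ n) : MvPowerSeries (Fin 2) R) ![a, a + (b - n)] := by
  refine iwzPowNeg_eq_intCoeff_zpow 𝓕.Fzi_zero_one (fun a b => ?_) n a b
  simpa [intCoeff_subSeries] using intCoeff_pow_rightChart 𝓕.X_one_mul_rightUnit 1 a (b + 1)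

theorem izwPow_Fzi_eq_zero {n a b : ℤ} (h : b < 0 ∨ a + b < n) : izwPow 𝓕.Fzi n a b = 0 := by
  rw [izwPow_Fzi]
  obtain h | h := h
  · exact intCoeff_of_neg _ (s := 0) h
  · exact intCoeff_of_neg _ (s := 1) (by simp; lia)

theorem iwzPowNeg_Fzi_eq_zero {n a b : ℤ} (h : a + b < n) : iwzPowNeg 𝓕.Fzi n a b = 0 := by
  rw [iwzPowNeg_Fzi]
  exact intCoeff_of_neg _ (s := 1) (by simp; lia)

theorem finsum_delta_mul (e N : ℤ) {v : ℤ → R} (hv : ∀ m, N < m → v m = 0) :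
    ∑ᶠ m, 𝓕.delta e m * v m =
      ∑ᶠ m, izwPow 𝓕.Fzi (-1) e m * v m - ∑ᶠ m, iwzPowNeg 𝓕.Fzi (-1) e m * v m := by
  have finite_support {u : ℤ → R} (L : ℤ) (hu : ∀ m, m < L → u m = 0) :
      (Function.support fun m => u m * v m).Finite := by
    refine (Set.finite_Icc L N).subset fun m hm => ⟨?_, ?_⟩
    · exact not_lt.1 fun h => hm (by simp [hu m h])
    · exact not_lt.1 fun h => hm (by simp [hv m h])
  simp only [delta, sub_mul]
  exact finsum_sub_distrib
    (finite_support 0 fun m hm => 𝓕.izwPow_Fzi_eq_zero (Or.inl hm))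
    (finite_support (-e - 1) fun m hm => 𝓕.iwzPowNeg_Fzi_eq_zero (by lia))

theorem izwPow_Fzi_natCast (m : ℕ) (a b : ℤ) :
    izwPow 𝓕.Fzi m a b = intCoeff (𝓕.subSeries ^ m) ![a, b] := by
  rw [izwPow_Fzi, zpow_natCast, Units.val_pow_eq_pow_val,
    ← intCoeff_pow_leftChart 𝓕.X_one_mul_leftUnit]
  rfl

theorem iwzPowNeg_Fzi_natCast (m : ℕ) (a b : ℤ) :
    iwzPowNeg 𝓕.Fzi m a b = intCoeff (𝓕.subSeries ^ m) ![a, b] := by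
  rw [iwzPowNeg_Fzi, zpow_natCast, Units.val_pow_eq_pow_val,
    ← intCoeff_pow_rightChart 𝓕.X_one_mul_rightUnit]
  rfl

theorem finsum_izwPow_mul_iwzPowNeg_eq (e0 e1 e2 : ℤ) :
    ∑ᶠ m : ℤ, izwPow 𝓕.Fzi (-1) e0 m * iwzPowNeg 𝓕.Fzi m e1 e2 =
      ∑ᶠ m : ℤ, izwPow 𝓕.Fzi (-1) e0 m * izwPow 𝓕.Fzi m e1 e2 := by
  refine finsum_congr fun m => ?_
  obtain hm | hm := lt_or_ge m 0
  · rw [𝓕.izwPow_Fzi_eq_zero (Or.inl hm), zero_mul, zero_mul]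
  · lift m to ℕ using hm
    rw [izwPow_Fzi_natCast 𝓕 m, iwzPowNeg_Fzi_natCast]

theorem nestedQuotient_leftUnit_swap (p q r : Fin 3) :
    nestedQuotient p q r 𝓕.rightUnit 𝓕.leftUnit = nestedQuotient q p r 𝓕.rightUnit 𝓕.leftUnit := by
  have mul_eq (p q : Fin 3) :=
    subst_mul_nestedQuotient p q r (Q := 𝓕.leftUnit) 𝓕.X_one_mul_rightUnit
  simp only [X_mul_pairUnit_left _ _ 𝓕.X_one_mul_leftUnit] at mul_eq
  refine eq_of_mul_eq_of_mem_nonZeroDivisors X_mem_nonzeroDivisors (mul_eq p q) ?_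
  rw [𝓕.subst_subSeries_subst_subSeries (by simp) (by simp) (by simp), mul_eq]

theorem nestedQuotient_rightUnit_eq (p q r : Fin 3) {Y : MvPowerSeries (Fin 3) R}
    (hY0 : constantCoeff Y = 0) (hY : X r * Y = subst ![X q * X r, X p * X r] 𝓕.subSeries) :
    nestedQuotient p q r 𝓕.rightUnit 𝓕.rightUnit =
      subst ![Y, X r] (↑𝓕.leftUnit⁻¹ : MvPowerSeries (Fin 2) R) := by
  refine eq_of_mul_eq_of_mem_nonZeroDivisors X_mem_nonzeroDivisors
    (subst_mul_nestedQuotient p q r 𝓕.X_one_mul_rightUnit) ?_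
  rw [X_mul_pairUnit_right _ _ 𝓕.X_one_mul_rightUnit,
    𝓕.subst_subSeries_subst_subSeries (by simp) (by simp) (by simp), ← hY, mul_comm (X r),
    subst_mul_subst_inv_left hY0 (constantCoeff_X r) 𝓕.X_one_mul_leftUnit]

theorem finsum_iwzPowNeg_mul_izwPow_eq_intCoeff {p q r : Fin 3} (hpq : p ≠ q) (hpr : p ≠ r)
    (hqr : q ≠ r) {e : Fin 3 → ℤ} {n : ℤ} (he : e r = e p + n + e q + 1) :
    ∑ᶠ m : ℤ, iwzPowNeg 𝓕.Fzi (-1) (e p) m * izwPow 𝓕.Fzi m n (e q) =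
      intCoeff (nestedQuotient p q r 𝓕.rightUnit 𝓕.leftUnit) e := by
  rw [intCoeff_nestedQuotient hpq hpr hqr]
  refine finsum_congr fun m => ?_
  rw [iwzPowNeg_Fzi, izwPow_Fzi, zpow_neg_one, sub_neg_eq_add, he]
  ring_nf

theorem finsum_iwzPowNeg_mul_izwPow_symm (e0 e1 e2 : ℤ) :
    ∑ᶠ m : ℤ, iwzPowNeg 𝓕.Fzi (-1) e0 m * izwPow 𝓕.Fzi m e1 e2 =
      ∑ᶠ m : ℤ, iwzPowNeg 𝓕.Fzi (-1) e2 m * izwPow 𝓕.Fzi m e1 e0 := by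
  let e : Fin 3 → ℤ := ![e0, e2, e0 + e1 + e2 + 1]
  calc
    _ = intCoeff (nestedQuotient 0 1 2 𝓕.rightUnit 𝓕.leftUnit) e :=
      𝓕.finsum_iwzPowNeg_mul_izwPow_eq_intCoeff (e := e) (by decide) (by decide) (by decide) rfl
    _ = intCoeff (nestedQuotient 1 0 2 𝓕.rightUnit 𝓕.leftUnit) e := by
      rw [nestedQuotient_leftUnit_swap]
    _ = _ := (𝓕.finsum_iwzPowNeg_mul_izwPow_eq_intCoeff (p := 1) (q := 0) (r := 2) (by decide)
      (by decide) (by decide) (show e0 + e1 + e2 + 1 = e2 + e1 + e0 + 1 by ring)).symm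

theorem finsum_iwzPowNeg_mul_iwzPowNeg_eq (e0 e1 e2 : ℤ) :
    ∑ᶠ m : ℤ, iwzPowNeg 𝓕.Fzi (-1) e0 m * iwzPowNeg 𝓕.Fzi m e1 e2 =
      ∑ᶠ m : ℤ, izwPow 𝓕.Fzi (-1) e2 m * izwPow 𝓕.Fzi m e1 e0 := by
  obtain ⟨Y, hY, hY0⟩ := exists_X_mul_eq_subst_X_mul (p := 0) (q := 1) (r := 2) (by decide)
    (by decide) (by decide) 𝓕.constantCoeff_subSeries
  let e : Fin 3 → ℤ := ![e0, e1, e0 + e1 + e2 + 1]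
  calc
    _ = intCoeff (nestedQuotient 0 1 2 𝓕.rightUnit 𝓕.rightUnit) e := by
      rw [intCoeff_nestedQuotient (by decide) (by decide) (by decide)]
      refine finsum_congr fun m => ?_
      rw [iwzPowNeg_Fzi, iwzPowNeg_Fzi, zpow_neg_one, sub_neg_eq_add]
      simp only [e, Matrix.cons_val]
      ring_nf
    _ = intCoeff (subst ![Y, X 2] (↑𝓕.leftUnit⁻¹ : MvPowerSeries (Fin 2) R)) e := by
      rw [𝓕.nestedQuotient_rightUnit_eq 0 1 2 hY0 hY]
    _ = _ := by
      rw [intCoeff_subst_X_mul_eq_subst (by decide) (by decide) (by decide)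
        𝓕.X_one_mul_leftUnit hY0 hY]
      refine finsum_congr fun m => ?_
      rw [izwPow_Fzi, izwPow_Fzi, zpow_neg_one]
      simp only [e, Matrix.cons_val]
      ring_nf

end FormalGroupLaw

end

/-- the `F`-Jacobi identity for delta distributions, coefficient of
`z0^e0 z1^e1 z2^e2`:
`i_{z1,z2} z0⁻¹δ_F(F(z1,ιz2)/z0) - i_{z2,z1} z0⁻¹δ_F(F(z1,ιz2)/z0)`
`= i_{z1,z0} z2⁻¹δ_F(F(z1,ιz0)/z2)`. -/
theorem deltaF_jacobi (R : Type*) [CommRing R] (𝓕 : FormalGroupLaw R) (e0 e1 e2 : ℤ) :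
    (∑ᶠ m : ℤ, 𝓕.delta e0 m * izwPow 𝓕.Fzi m e1 e2)
    - (∑ᶠ m : ℤ, 𝓕.delta e0 m * iwzPowNeg 𝓕.Fzi m e1 e2)
    = ∑ᶠ m : ℤ, 𝓕.delta e2 m * izwPow 𝓕.Fzi m e1 e0 := by
  rw [𝓕.finsum_delta_mul e0 (e1 + e2) fun m hm => 𝓕.izwPow_Fzi_eq_zero (Or.inr hm),
    𝓕.finsum_delta_mul e0 (e1 + e2) fun m hm => 𝓕.iwzPowNeg_Fzi_eq_zero hm,
    𝓕.finsum_delta_mul e2 (e1 + e0) fun m hm => 𝓕.izwPow_Fzi_eq_zero (Or.inr hm)]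
  linear_combination -𝓕.finsum_izwPow_mul_iwzPowNeg_eq e0 e1 e2 -
    𝓕.finsum_iwzPowNeg_mul_izwPow_symm e0 e1 e2 + 𝓕.finsum_iwzPowNeg_mul_iwzPowNeg_eq e0 e1 e2
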